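/- Convergence criterion for cyclotomic harmonic sums: let p ≥ 1, let a_1,…,a_p be positive integers, b_1,…,b_p nonnegative integers, and c_1,…,c_p nonzero integers. The sequence n ↦ S_{(a_1,b_1,c_1),…,(a_p,b_p,c_p)}(n) converges to a finite limit as n → ∞ if and only if c_1 ≠ 1. -/

import Mathlib

open Filter

/-- Cyclotomic harmonic sums: `cycH [(a₁,b₁,c₁),…] n` is `S_{(a₁,b₁,c₁),…}(n)`;
the empty sum equals `1`. -/
noncomputable def cycH : List (ℕ × ℤ × ℤ) → ℕ → ℝ
  | [], _ => 1
  | (a, b, c) :: t, n =>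
      ∑ i ∈ Finset.Icc 1 n,
        ((c.sign : ℝ)) ^ i / ((a : ℝ) * i + (b : ℝ)) ^ c.natAbs * cycH t i

/-!
If `c₁ = 1`, divergence follows from that of the harmonic series once the inner sum stays away
from `0`, so the point is that every convergent sum has a *nonzero* limit. The weights
`u i = (a i + b) ^ (-|c|)` are strictly completely monotone. For a sign `σ`, the tails
`q i = ∑ k, σ ^ k * u (i + k)` satisfy `q i - σ * q (i + 1) = u i`; they are again strictly
completely monotone and are `O(1 / n)` (if `σ = 1`, this uses `|c| ≥ 2`). Summation by parts turns
`∑ i, σ ^ i * u i * S (i + 1)` into `∑ i, σ ^ i * q i * (S (i + 1) - S i)`, whose weights are `q`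
times the weights of the next layer of `S`: strictly completely monotone and `O(1 / n ^ 2)`. After
all layers are peeled off, the limit is, up to sign, the first term of a positive sequence.
-/

open Asymptotics
open scoped Topology fwdDiff

/-! ### Completely monotone sequences -/

lemma neg_one_pow_mul_fwdDiff_iter_succ {M R : Type*} [AddCommMonoid M] [Ring R] (h : M)
    (f : M → R) (n : ℕ) (y : M) :
    (-1) ^ (n + 1) * (Δ_[h])^[n + 1] f y = (-1) ^ n * (Δ_[h])^[n] (-Δ_[h] f) y := by
  rw [← neg_one_smul R (Δ_[h] f), fwdDiff_iter_const_smul, Function.iterate_succ_apply,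
    Pi.smul_apply, smul_eq_mul, pow_succ, mul_assoc]

section StrictlyCompletelyMonotone

variable {R : Type*} [CommRing R] [PartialOrder R]

/-- Strictly completely monotone sequences: all iterated differences alternate in sign and none
of them vanishes anywhere. -/
def StrictlyCompletelyMonotone (f : ℕ → R) : Prop :=
  ∀ n i, 0 < (-1) ^ n * (Δ_[1])^[n] f i

namespace StrictlyCompletelyMonotone

variable {f g : ℕ → R}

lemma pos (hf : StrictlyCompletelyMonotone f) (i : ℕ) : 0 < f i := by
  simpa using hf 0 i

lemma neg_fwdDiff (hf : StrictlyCompletelyMonotone f) :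
    StrictlyCompletelyMonotone (-Δ_[1] f) := fun n i ↦ by
  simpa only [neg_one_pow_mul_fwdDiff_iter_succ] using hf (n + 1) i

lemma comp_succ (hf : StrictlyCompletelyMonotone f) :
    StrictlyCompletelyMonotone fun i ↦ f (i + 1) := fun n i ↦ by
  simpa only [fwdDiff_iter_comp_add] using hf n (i + 1)

variable [IsStrictOrderedRing R]

lemma strictAnti (hf : StrictlyCompletelyMonotone f) : StrictAnti f :=
  strictAnti_nat_of_succ_lt fun i ↦ by simpa [fwdDiff] using hf.neg_fwdDiff.pos i

lemma mul (hf : StrictlyCompletelyMonotone f) (hg : StrictlyCompletelyMonotone g) :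
    StrictlyCompletelyMonotone (f * g) := fun n ↦ by
  induction n generalizing f g with
  | zero => intro i; simpa using mul_pos (hf.pos i) (hg.pos i)
  | succ n ih =>
    intro i
    have leibniz : -Δ_[1] (f * g) = -Δ_[1] f * g + (fun i ↦ f (i + 1)) * -Δ_[1] g := by
      ext i
      simp only [fwdDiff, Pi.neg_apply, Pi.mul_apply, Pi.add_apply]
      ring
    rw [neg_one_pow_mul_fwdDiff_iter_succ, leibniz, fwdDiff_iter_add, Pi.add_apply, mul_add]
    exact add_pos (ih hf.neg_fwdDiff hg i) (ih hf.comp_succ hg.neg_fwdDiff i)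

lemma pow (hf : StrictlyCompletelyMonotone f) {k : ℕ} (hk : k ≠ 0) :
    StrictlyCompletelyMonotone (f ^ k) := by
  induction k, Nat.one_le_iff_ne_zero.2 hk using Nat.le_induction with
  | base => simpa using hf
  | succ k hk ih => simpa only [pow_succ] using (ih (by omega)).mul hf

end StrictlyCompletelyMonotone

end StrictlyCompletelyMonotone

section Inv

variable {K : Type*} [Field K] [LinearOrder K] [IsStrictOrderedRing K] {α β : K}

lemma neg_one_pow_mul_fwdDiff_iter_inv (hα : 0 < α) (hβ : 0 < β) (n i : ℕ) :
    (-1) ^ n * (Δ_[1])^[n] (fun i : ℕ ↦ (α * i + β)⁻¹) i =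
      n.factorial * α ^ n * ∏ k ∈ Finset.range (n + 1), (α * (i + k : ℕ) + β)⁻¹ := by
  induction n generalizing i with
  | zero => simp
  | succ n ih =>
    have hpos (j : ℕ) : α * (j : K) + β ≠ 0 := by positivity
    set P := ∏ k ∈ Finset.range n, (α * (i + 1 + k : ℕ) + β)⁻¹ with hP
    have hfst : ∏ k ∈ Finset.range (n + 1), (α * (i + k : ℕ) + β)⁻¹ = P * (α * i + β)⁻¹ := by
      rw [Finset.prod_range_succ', hP]
      simp only [add_zero, add_assoc, add_comm 1]
    have hsnd : ∏ k ∈ Finset.range (n + 1), (α * (i + 1 + k : ℕ) + β)⁻¹ =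
        P * (α * (i + 1 + n : ℕ) + β)⁻¹ := Finset.prod_range_succ _ _
    have hboth : ∏ k ∈ Finset.range (n + 1 + 1), (α * (i + k : ℕ) + β)⁻¹ =
        P * (α * i + β)⁻¹ * (α * (i + 1 + n : ℕ) + β)⁻¹ := by
      rw [Finset.prod_range_succ, hfst, add_right_comm i 1 n, add_assoc i n 1]
    have hdiff : (α * i + β)⁻¹ - (α * (i + 1 + n : ℕ) + β)⁻¹ =
        (n + 1) * α * ((α * i + β)⁻¹ * (α * (i + 1 + n : ℕ) + β)⁻¹) := by
      rw [inv_sub_inv (hpos _) (hpos _), div_eq_mul_inv, mul_inv]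
      push_cast
      ring
    calc (-1) ^ (n + 1) * (Δ_[1])^[n + 1] (fun i : ℕ ↦ (α * i + β)⁻¹) i
        = (-1) ^ n * (Δ_[1])^[n] (fun i : ℕ ↦ (α * i + β)⁻¹) i -
            (-1) ^ n * (Δ_[1])^[n] (fun i : ℕ ↦ (α * i + β)⁻¹) (i + 1) := by
          rw [Function.iterate_succ_apply', fwdDiff]
          ring
      _ = n.factorial * α ^ n * P * ((α * i + β)⁻¹ - (α * (i + 1 + n : ℕ) + β)⁻¹) := by
          rw [ih, ih, hfst, hsnd]
          ring
      _ = _ := by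
          rw [hdiff, hboth, Nat.factorial_succ]
          push_cast
          ring

lemma strictlyCompletelyMonotone_inv_mul_add (hα : 0 < α) (hβ : 0 < β) :
    StrictlyCompletelyMonotone fun i : ℕ ↦ (α * i + β)⁻¹ := fun n i ↦ by
  rw [neg_one_pow_mul_fwdDiff_iter_inv hα hβ]
  have := Finset.prod_pos (s := Finset.range (n + 1)) (f := fun k ↦ (α * (i + k : ℕ) + β)⁻¹)
    fun k _ ↦ by positivity
  positivity

end Inv

/-! ### Signed tails -/

/-- `IsSignedTail σ u q` says that `q i = u i + σ * u (i + 1) + σ ^ 2 * u (i + 2) + …`, a possibly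
conditionally convergent series. For `|σ| = 1` this is encoded by the recursion the tails satisfy
together with their decay. -/
structure IsSignedTail {R : Type*} [Ring R] [TopologicalSpace R] (σ : R) (u q : ℕ → R) :
    Prop where
  tendsto_zero : Tendsto q atTop (𝓝 0)
  sub_mul_succ : ∀ i, q i - σ * q (i + 1) = u i

lemma tendsto_zero_pow_mul_iff {σ : ℝ} (hσ : |σ| = 1) {l : Filter ℕ} {f : ℕ → ℝ} :
    Tendsto (fun n ↦ σ ^ n * f n) l (𝓝 0) ↔ Tendsto f l (𝓝 0) := by
  simp [tendsto_zero_iff_norm_tendsto_zero, hσ]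

lemma isBigO_pow_mul_left_iff {σ : ℝ} (hσ : |σ| = 1) {l : Filter ℕ} {f g : ℕ → ℝ} :
    (fun n ↦ σ ^ n * f n) =O[l] g ↔ f =O[l] g := by
  rw [← isBigO_norm_left, ← isBigO_norm_left (f' := f)]
  simp [hσ]

lemma tendsto_zero_mul_of_isBigO_inv {α : Type*} {l : Filter α} {f g k : α → ℝ}
    (hf : f =O[l] fun x ↦ (k x)⁻¹) (hg : g =o[l] k) :
    Tendsto (fun x ↦ f x * g x) l (𝓝 0) := by
  refine (isLittleO_one_iff ℝ).1 ((hf.mul_isLittleO hg).trans_isBigO ?_)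
  exact .of_bound 1 (Eventually.of_forall fun x ↦ by by_cases hx : k x = 0 <;> simp [hx])

namespace IsSignedTail

lemma neg_fwdDiff {R : Type*} [Ring R] [TopologicalSpace R] [ContinuousSub R] {σ : R}
    {u q : ℕ → R} (h : IsSignedTail σ u q) : IsSignedTail σ (-Δ_[1] u) (-Δ_[1] q) where
  tendsto_zero := by
    simpa [fwdDiff, Pi.neg_def] using
      h.tendsto_zero.sub ((tendsto_add_atTop_iff_nat 1).2 h.tendsto_zero)
  sub_mul_succ i := by
    simp only [Pi.neg_apply, fwdDiff, ← h.sub_mul_succ]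
    noncomm_ring

lemma sum_mul_succ {R : Type*} [CommRing R] [TopologicalSpace R] {σ : R} {u q : ℕ → R}
    (h : IsSignedTail σ u q) (S : ℕ → R) (n : ℕ) :
    ∑ i ∈ Finset.range n, σ ^ i * u i * S (i + 1) =
      ∑ i ∈ Finset.range n, σ ^ i * q i * (S (i + 1) - S i) + q 0 * S 0 - σ ^ n * (q n * S n) := by
  induction n with
  | zero => simp
  | succ n ih =>
    rw [Finset.sum_range_succ, Finset.sum_range_succ, ih, ← h.sub_mul_succ n]
    ring

section Positivity

variable {R : Type*} [CommRing R] [LinearOrder R] [IsStrictOrderedRing R] [TopologicalSpace R]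
  [OrderTopology R] {σ : R} {u q : ℕ → R}

lemma pos (h : IsSignedTail σ u q) (hσ : |σ| = 1) (hu : ∀ i, 0 < u i) (hanti : StrictAnti u)
    (i : ℕ) : 0 < q i := by
  have two_step (i : ℕ) : q (i + 2) < q i := by
    have hsum : 0 < u i + σ * u (i + 1) := by
      have habs : |σ * u (i + 1)| = u (i + 1) := by rw [abs_mul, hσ, one_mul, abs_of_pos (hu _)]
      linarith [neg_abs_le (σ * u (i + 1)), hanti i.lt_succ_self]
    have hσ2 : σ ^ 2 = 1 := by rw [← sq_abs, hσ, one_pow]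
    linear_combination hsum - h.sub_mul_succ i - σ * h.sub_mul_succ (i + 1) - q (i + 2) * hσ2
  have nonneg (j : ℕ) : 0 ≤ q j := by
    have heven : Antitone fun k ↦ q (j + 2 * k) :=
      antitone_nat_of_succ_le fun k ↦ (two_step (j + 2 * k)).le
    have hlim : Tendsto (fun k ↦ q (j + 2 * k)) atTop (𝓝 0) :=
      h.tendsto_zero.comp (tendsto_atTop_mono (fun k ↦ by simp only [id]; omega) tendsto_id)
    simpa using heven.le_of_tendsto hlim 0
  exact (nonneg (i + 2)).trans_lt (two_step i)

lemma strictlyCompletelyMonotone (h : IsSignedTail σ u q) (hσ : |σ| = 1)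
    (hu : StrictlyCompletelyMonotone u) : StrictlyCompletelyMonotone q := fun n ↦ by
  induction n generalizing u q with
  | zero => simpa using h.pos hσ hu.pos hu.strictAnti
  | succ n ih =>
    simpa only [neg_one_pow_mul_fwdDiff_iter_succ] using ih h.neg_fwdDiff hu.neg_fwdDiff

end Positivity

lemma tendsto_sum_mul_succ {σ : ℝ} {u q S : ℕ → ℝ} (h : IsSignedTail σ u q) (hσ : |σ| = 1)
    (hq : q =O[atTop] fun n ↦ (n : ℝ)⁻¹) (hS : S =o[atTop] fun n ↦ (n : ℝ)) {L : ℝ}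
    (hL : Tendsto (fun n ↦ ∑ i ∈ Finset.range n, σ ^ i * q i * (S (i + 1) - S i)) atTop (𝓝 L)) :
    Tendsto (fun n ↦ ∑ i ∈ Finset.range n, σ ^ i * u i * S (i + 1)) atTop (𝓝 (L + q 0 * S 0)) := by
  have boundary := (tendsto_zero_pow_mul_iff hσ).2 (tendsto_zero_mul_of_isBigO_inv hq hS)
  simpa only [h.sum_mul_succ S, sub_zero] using (hL.add_const (q 0 * S 0)).sub boundary

end IsSignedTail

lemma isBigO_inv_of_sub_succ_isBigO_inv_sq {E : Type*} [NormedAddCommGroup E] {f : ℕ → E}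
    (hf : Tendsto f atTop (𝓝 0))
    (h : (fun n ↦ f n - f (n + 1)) =O[atTop] fun n ↦ ((n : ℝ) ^ 2)⁻¹) :
    f =O[atTop] fun n ↦ (n : ℝ)⁻¹ := by
  obtain ⟨C, hC0, hC⟩ := h.exists_pos
  obtain ⟨N, hN⟩ := eventually_atTop.1 hC.bound
  refine .of_bound (C * 2) ?_
  filter_upwards [eventually_ge_atTop N, eventually_ge_atTop 1] with n hn h1
  have hdist (m : ℕ) (hm : n ≤ m) : dist (f n) (f m) ≤ C * 2 * ‖(n : ℝ)⁻¹‖ := by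
    have hIco : Finset.Ico n m = Finset.Ioo (n - 1) m := by
      ext
      simp only [Finset.mem_Ico, Finset.mem_Ioo]
      omega
    calc dist (f n) (f m)
        ≤ ∑ i ∈ Finset.Ico n m, C * ((i : ℝ) ^ 2)⁻¹ := dist_le_Ico_sum_of_dist_le hm fun hk _ ↦ by
          simpa [dist_eq_norm] using hN _ (hn.trans hk)
      _ ≤ C * (2 / ((n - 1 : ℕ) + 1)) := by
          rw [← Finset.mul_sum, hIco]
          gcongr
          exact sum_Ioo_inv_sq_le _ _
      _ = C * 2 * ‖(n : ℝ)⁻¹‖ := by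
          rw [Nat.cast_sub h1]
          simp [div_eq_mul_inv, mul_assoc]
  simpa using le_of_tendsto (tendsto_const_nhds.dist hf) ((eventually_ge_atTop n).mono hdist)

lemma exists_isSignedTail_of_tendsto_sum {σ l : ℝ} {u : ℕ → ℝ} (hσ : |σ| = 1)
    (hl : Tendsto (fun n ↦ ∑ i ∈ Finset.range n, σ ^ i * u i) atTop (𝓝 l)) :
    ∃ q, IsSignedTail σ u q := by
  have hσ2 : σ ^ 2 = 1 := by rw [← sq_abs, hσ, one_pow]
  refine ⟨fun j ↦ σ ^ j * (l - ∑ i ∈ Finset.range j, σ ^ i * u i), ?_, fun i ↦ ?_⟩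
  · exact (tendsto_zero_pow_mul_iff hσ).2 (by simpa using hl.const_sub l)
  · have hσi : (σ ^ i) ^ 2 = 1 := by rw [pow_right_comm, hσ2, one_pow]
    rw [Finset.sum_range_succ]
    linear_combination u i * hσi * σ ^ 2 -
      (σ ^ i * (l - ∑ i ∈ Finset.range i, σ ^ i * u i) - u i) * hσ2

lemma exists_isSignedTail_of_isBigO_inv_sq {σ : ℝ} {u : ℕ → ℝ} (hσ : |σ| = 1)
    (hu : u =O[atTop] fun n ↦ ((n : ℝ) ^ 2)⁻¹) :
    ∃ q, IsSignedTail σ u q ∧ q =O[atTop] fun n ↦ (n : ℝ)⁻¹ := by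
  have hsigned := (isBigO_pow_mul_left_iff hσ).2 hu
  have hsum : Summable fun n ↦ σ ^ n * u n :=
    summable_of_isBigO_nat (Real.summable_nat_pow_inv.2 one_lt_two) hsigned
  obtain ⟨q, hq⟩ := exists_isSignedTail_of_tendsto_sum hσ hsum.hasSum.tendsto_sum_nat
  have hdecay := isBigO_inv_of_sub_succ_isBigO_inv_sq
    ((tendsto_zero_pow_mul_iff hσ).2 hq.tendsto_zero) <| hsigned.congr_left fun n ↦ by
      rw [← hq.sub_mul_succ]
      ring
  exact ⟨q, hq, (isBigO_pow_mul_left_iff hσ).1 hdecay⟩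

lemma exists_isSignedTail_neg_one_of_strictAnti {u : ℕ → ℝ} (hu : ∀ i, 0 < u i)
    (hanti : StrictAnti u) (hlim : Tendsto u atTop (𝓝 0)) :
    ∃ q, IsSignedTail (-1) u q ∧ q =O[atTop] u := by
  obtain ⟨l, hl⟩ := hanti.antitone.tendsto_alternating_series_of_tendsto_zero hlim
  obtain ⟨q, hq⟩ := exists_isSignedTail_of_tendsto_sum (by simp) hl
  refine ⟨q, hq, .of_norm_le fun i ↦ ?_⟩
  have hpos := hq.pos (by simp) hu hanti
  rw [Real.norm_of_nonneg (hpos i).le]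
  linarith [hq.sub_mul_succ i, hpos (i + 1)]

/-! ### Divergent series -/

lemma tendsto_sum_range_atTop_of_eventually_le {M : Type*} [AddCommGroup M] [LinearOrder M]
    [IsOrderedAddMonoid M] {f g : ℕ → M} (hfg : ∀ᶠ n in atTop, f n ≤ g n)
    (hf : Tendsto (fun n ↦ ∑ i ∈ Finset.range n, f i) atTop atTop) :
    Tendsto (fun n ↦ ∑ i ∈ Finset.range n, g i) atTop atTop := by
  obtain ⟨N, hN⟩ := eventually_atTop.1 hfg
  refine tendsto_atTop_mono' _ ?_ (tendsto_atTop_add_const_right _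
    (∑ i ∈ Finset.range N, g i - ∑ i ∈ Finset.range N, f i) hf)
  filter_upwards [eventually_ge_atTop N] with n hn
  have hIco : ∑ i ∈ Finset.Ico N n, f i ≤ ∑ i ∈ Finset.Ico N n, g i :=
    Finset.sum_le_sum fun i hi ↦ hN i (Finset.mem_Ico.1 hi).1
  rw [Finset.sum_Ico_eq_sub f hn, Finset.sum_Ico_eq_sub g hn] at hIco
  rwa [add_sub_left_comm, ← le_sub_iff_add_le']

lemma not_summable_inv_mul_natCast_add {α : ℝ} (hα : α ≠ 0) (β : ℝ) :
    ¬ Summable fun n : ℕ ↦ (α * n + β)⁻¹ := fun h ↦ by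
  refine lt_irrefl (1 : ℝ) ((Real.summable_one_div_nat_add_rpow (β / α) 1).1 ?_)
  refine (h.abs.mul_left |α|).congr fun n ↦ ?_
  rw [Real.rpow_one, one_div, ← abs_inv, ← abs_mul]
  congr 1
  field_simp

/-! ### Cyclotomic harmonic sums -/

/-- The entries `(a, b, c)` allowed in a cyclotomic harmonic sum; `0 < a + b` makes every
denominator `a * i + b` with `1 ≤ i` positive. -/
structure IsCycIndex (x : ℕ × ℤ × ℤ) : Prop where
  pos : 0 < x.1
  add_pos : 0 < x.1 + x.2.1
  exponent_ne_zero : x.2.2 ≠ 0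

/-- The unsigned weight `(a * (i + 1) + b) ^ (-|c|)` of the entry `(a, b, c)` at the summation
index `i + 1`; with the index shifted, sums run over `Finset.range n`. -/
noncomputable def cycWeight (x : ℕ × ℤ × ℤ) (i : ℕ) : ℝ :=
  ((x.1 : ℝ) * i + (x.1 + x.2.1 : ℤ))⁻¹ ^ x.2.2.natAbs

lemma cycH_cons (x : ℕ × ℤ × ℤ) (t : List (ℕ × ℤ × ℤ)) (n : ℕ) :
    cycH (x :: t) n = ∑ i ∈ Finset.range n,
      (x.2.2.sign : ℝ) ^ (i + 1) * cycWeight x i * cycH t (i + 1) := by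
  obtain ⟨a, b, c⟩ := x
  rw [cycH, ← Finset.Ico_add_one_right_eq_Icc, Finset.sum_Ico_eq_sum_range]
  refine Finset.sum_congr rfl fun i _ ↦ ?_
  have : (a : ℝ) * (1 + i : ℕ) + b = a * i + (a + b : ℤ) := by push_cast; ring
  rw [this, cycWeight, inv_pow, div_eq_mul_inv, add_comm 1 i]

lemma cycH_cons_zero (x : ℕ × ℤ × ℤ) (t : List (ℕ × ℤ × ℤ)) : cycH (x :: t) 0 = 0 := by
  simp [cycH_cons]

lemma cycH_cons_succ_sub (x : ℕ × ℤ × ℤ) (t : List (ℕ × ℤ × ℤ)) (n : ℕ) :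
    cycH (x :: t) (n + 1) - cycH (x :: t) n =
      (x.2.2.sign : ℝ) ^ (n + 1) * cycWeight x n * cycH t (n + 1) := by
  rw [cycH_cons, cycH_cons, Finset.sum_range_succ, add_sub_cancel_left]

namespace IsCycIndex

variable {x : ℕ × ℤ × ℤ} (hx : IsCycIndex x)
include hx

lemma abs_sign : |(x.2.2.sign : ℝ)| = 1 := by
  exact_mod_cast Int.abs_sign_of_ne_zero hx.exponent_ne_zero

lemma strictlyCompletelyMonotone_cycWeight : StrictlyCompletelyMonotone (cycWeight x) :=
  (strictlyCompletelyMonotone_inv_mul_add (Nat.cast_pos.2 hx.pos)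
    (Int.cast_pos.2 hx.add_pos)).pow (Int.natAbs_ne_zero.2 hx.exponent_ne_zero)

lemma cycWeight_isBigO_inv_pow {k : ℕ} (hk : k ≤ x.2.2.natAbs) :
    cycWeight x =O[atTop] fun n ↦ ((n : ℝ) ^ k)⁻¹ := by
  refine .of_bound 1 ?_
  filter_upwards [eventually_ge_atTop 1] with n hn
  have ha : (1 : ℝ) ≤ x.1 := by exact_mod_cast hx.pos
  have hab : (0 : ℝ) < (x.1 + x.2.1 : ℤ) := by exact_mod_cast hx.add_pos
  have hn1 : (1 : ℝ) ≤ n := by exact_mod_cast hn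
  have hden : (n : ℝ) ≤ x.1 * n + (x.1 + x.2.1 : ℤ) :=
    le_add_of_le_of_nonneg (le_mul_of_one_le_left n.cast_nonneg ha) hab.le
  rw [Real.norm_of_nonneg (hx.strictlyCompletelyMonotone_cycWeight.pos n).le,
    Real.norm_of_nonneg (by positivity), one_mul, cycWeight, inv_pow]
  gcongr ?_⁻¹
  calc (n : ℝ) ^ k ≤ (n : ℝ) ^ x.2.2.natAbs := pow_le_pow_right₀ hn1 hk
    _ ≤ _ := by gcongr

lemma cycWeight_isBigO_inv : cycWeight x =O[atTop] fun n ↦ (n : ℝ)⁻¹ := by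
  simpa using hx.cycWeight_isBigO_inv_pow (Int.natAbs_pos.2 hx.exponent_ne_zero)

lemma exists_isSignedTail_cycWeight (hc : x.2.2 ≠ 1) :
    ∃ q, IsSignedTail (x.2.2.sign : ℝ) (cycWeight x) q ∧ q =O[atTop] fun n ↦ (n : ℝ)⁻¹ := by
  rcases hx.exponent_ne_zero.lt_or_gt with hneg | hpos
  · have hcm := hx.strictlyCompletelyMonotone_cycWeight
    have hw := hx.cycWeight_isBigO_inv
    obtain ⟨q, hq, hqw⟩ := exists_isSignedTail_neg_one_of_strictAnti hcm.pos hcm.strictAnti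
      (hw.trans_tendsto tendsto_inv_atTop_nhds_zero_nat)
    exact ⟨q, by simpa [Int.sign_eq_neg_one_of_neg hneg] using hq, hqw.trans hw⟩
  · exact exists_isSignedTail_of_isBigO_inv_sq hx.abs_sign
      (hx.cycWeight_isBigO_inv_pow (by omega))

end IsCycIndex

lemma cycH_isLittleO_natCast {t : List (ℕ × ℤ × ℤ)} (ht : ∀ x ∈ t, IsCycIndex x) :
    cycH t =o[atTop] fun n ↦ (n : ℝ) := by
  induction t with
  | nil =>
    exact (isLittleO_const_id_atTop (1 : ℝ)).comp_tendsto tendsto_natCast_atTop_atTop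
  | cons x t ih =>
    obtain ⟨hx, ht⟩ := List.forall_mem_cons.1 ht
    have hshift : (fun n ↦ cycH t (n + 1)) =o[atTop] fun n ↦ (n : ℝ) := by
      refine ((ih ht).comp_tendsto (tendsto_add_atTop_nat 1)).trans_isBigO (.of_bound 2 ?_)
      filter_upwards [eventually_ge_atTop 1] with n hn
      have : (1 : ℝ) ≤ n := by exact_mod_cast hn
      simp only [Function.comp_apply, Real.norm_natCast, Nat.cast_add_one]
      rw [Real.norm_of_nonneg (by positivity)]
      linarith
    have hterm : Tendsto (fun n ↦ (x.2.2.sign : ℝ) ^ (n + 1) * cycWeight x n * cycH t (n + 1))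
        atTop (𝓝 0) := by
      have := tendsto_zero_mul_of_isBigO_inv hx.cycWeight_isBigO_inv hshift
      simpa [tendsto_zero_iff_norm_tendsto_zero, hx.abs_sign] using this
    simpa only [funext (cycH_cons x t)] using isLittleO_sum_range_of_tendsto_zero hterm

lemma exists_tendsto_sum_mul_cycH {t : List (ℕ × ℤ × ℤ)} (ht : ∀ x ∈ t, IsCycIndex x) {σ : ℝ}
    (hσ : |σ| = 1) {u q : ℕ → ℝ} (h : IsSignedTail σ u q) (hq : StrictlyCompletelyMonotone q)
    (hqO : q =O[atTop] fun n ↦ (n : ℝ)⁻¹) :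
    ∃ L ≠ 0, Tendsto (fun n ↦ ∑ i ∈ Finset.range n, σ ^ i * u i * cycH t (i + 1)) atTop (𝓝 L) := by
  induction t generalizing σ u q with
  | nil =>
    refine ⟨q 0, (hq.pos 0).ne', ?_⟩
    simpa [cycH] using
      h.tendsto_sum_mul_succ hσ hqO (cycH_isLittleO_natCast ht) (L := 0) (by simp [cycH])
  | cons x t ih =>
    have hlittle := cycH_isLittleO_natCast ht
    obtain ⟨hx, ht⟩ := List.forall_mem_cons.1 ht
    set s : ℝ := (x.2.2.sign : ℝ) with hs
    have hσs : |σ * s| = 1 := by rw [abs_mul, hσ, hx.abs_sign, one_mul]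
    have hw := hq.mul hx.strictlyCompletelyMonotone_cycWeight
    have hwO : (q * cycWeight x) =O[atTop] fun n ↦ ((n : ℝ) ^ 2)⁻¹ := by
      simpa [sq] using! hqO.mul hx.cycWeight_isBigO_inv
    obtain ⟨r, hr, hrO⟩ := exists_isSignedTail_of_isBigO_inv_sq hσs hwO
    obtain ⟨L, hL, hlim⟩ := ih ht hσs hr (hr.strictlyCompletelyMonotone hσs hw) hrO
    refine ⟨s * L, mul_ne_zero (abs_ne_zero.1 (by simp [hs, hx.abs_sign])) hL, ?_⟩
    have hparts : Tendsto (fun n ↦ ∑ i ∈ Finset.range n,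
        σ ^ i * q i * (cycH (x :: t) (i + 1) - cycH (x :: t) i)) atTop (𝓝 (s * L)) :=
      (hlim.const_mul s).congr fun n ↦ by
        rw [Finset.mul_sum]
        refine Finset.sum_congr rfl fun i _ ↦ ?_
        rw [cycH_cons_succ_sub, Pi.mul_apply]
        ring
    simpa [cycH_cons_zero] using h.tendsto_sum_mul_succ hσ hqO hlittle hparts

section Cons

variable {x : ℕ × ℤ × ℤ} {t : List (ℕ × ℤ × ℤ)}

lemma exists_tendsto_cycH_cons_of_ne_one (hx : IsCycIndex x) (ht : ∀ y ∈ t, IsCycIndex y)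
    (hc : x.2.2 ≠ 1) : ∃ L ≠ 0, Tendsto (cycH (x :: t)) atTop (𝓝 L) := by
  have hs := hx.abs_sign
  obtain ⟨q, hq, hqO⟩ := hx.exists_isSignedTail_cycWeight hc
  obtain ⟨L, hL, hlim⟩ := exists_tendsto_sum_mul_cycH ht hs hq
    (hq.strictlyCompletelyMonotone hs hx.strictlyCompletelyMonotone_cycWeight) hqO
  refine ⟨x.2.2.sign * L, mul_ne_zero (abs_ne_zero.1 (by simp [hs])) hL, ?_⟩
  refine (hlim.const_mul _).congr fun n ↦ ?_
  rw [cycH_cons, Finset.mul_sum]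
  exact Finset.sum_congr rfl fun i _ ↦ by ring

lemma tendsto_mul_cycH_cons_atTop (hx : IsCycIndex x) (hc : x.2.2 = 1) {s : ℝ}
    (h : ∀ᶠ n in atTop, 1 ≤ s * cycH t n) :
    Tendsto (fun n ↦ s * cycH (x :: t) n) atTop atTop := by
  have hpos := hx.strictlyCompletelyMonotone_cycWeight.pos
  have hdiv : Tendsto (fun n ↦ ∑ i ∈ Finset.range n, cycWeight x i) atTop atTop := by
    rw [← not_summable_iff_tendsto_nat_atTop_of_nonneg fun i ↦ (hpos i).le]
    have hw : cycWeight x = fun i : ℕ ↦ ((x.1 : ℝ) * i + (x.1 + x.2.1 : ℤ))⁻¹ := by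
      ext i
      simp [cycWeight, hc]
    simpa [hw] using
      not_summable_inv_mul_natCast_add (Nat.cast_ne_zero.2 hx.pos.ne') (x.1 + x.2.1)
  have hterm : ∀ᶠ n in atTop, cycWeight x n ≤ cycWeight x n * (s * cycH t (n + 1)) := by
    filter_upwards [(tendsto_add_atTop_nat 1).eventually h] with n hn
    exact le_mul_of_one_le_right (hpos n).le hn
  refine (tendsto_sum_range_atTop_of_eventually_le hterm hdiv).congr fun n ↦ ?_
  rw [cycH_cons, Finset.mul_sum]
  exact Finset.sum_congr rfl fun i _ ↦ by
    simp only [hc, Int.sign_one, Int.cast_one, one_pow, one_mul]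
    ring

end Cons

lemma exists_eventually_one_le_mul_cycH {t : List (ℕ × ℤ × ℤ)} (ht : ∀ x ∈ t, IsCycIndex x) :
    ∃ s : ℝ, ∀ᶠ n in atTop, 1 ≤ s * cycH t n := by
  induction t with
  | nil => exact ⟨1, by simp [cycH]⟩
  | cons x t ih =>
    obtain ⟨hx, ht⟩ := List.forall_mem_cons.1 ht
    by_cases hc : x.2.2 = 1
    · obtain ⟨s, hs⟩ := ih ht
      exact ⟨s, (tendsto_mul_cycH_cons_atTop hx hc hs).eventually_ge_atTop 1⟩
    · obtain ⟨L, hL, hlim⟩ := exists_tendsto_cycH_cons_of_ne_one hx ht hc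
      refine ⟨2 / L, (hlim.const_mul (2 / L)).eventually_const_le ?_⟩
      rw [div_mul_cancel₀ _ hL]
      exact one_lt_two

theorem exists_tendsto_cycH_cons_iff {x : ℕ × ℤ × ℤ} {t : List (ℕ × ℤ × ℤ)}
    (hx : IsCycIndex x) (ht : ∀ y ∈ t, IsCycIndex y) :
    (∃ L, Tendsto (cycH (x :: t)) atTop (𝓝 L)) ↔ x.2.2 ≠ 1 := by
  refine ⟨fun ⟨L, hL⟩ hc ↦ ?_, fun hc ↦ ?_⟩
  · obtain ⟨s, hs⟩ := exists_eventually_one_le_mul_cycH ht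
    exact not_tendsto_nhds_of_tendsto_atTop (tendsto_mul_cycH_cons_atTop hx hc hs) _
      (hL.const_mul s)
  · obtain ⟨L, -, hL⟩ := exists_tendsto_cycH_cons_of_ne_one hx ht hc
    exact ⟨L, hL⟩

theorem cycH_convergence_criterion_general (p : ℕ)
    (a : Fin (p + 1) → ℕ) (b c : Fin (p + 1) → ℤ)
    (ha : ∀ i, 0 < a i) (hab : ∀ i, 0 < a i + b i) (hc : ∀ i, c i ≠ 0) :
    (∃ L : ℝ, Tendsto (fun n => cycH (List.ofFn fun i => (a i, b i, c i)) n)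
        atTop (nhds L)) ↔ c 0 ≠ 1 := by
  have hindex (i : Fin (p + 1)) : IsCycIndex (a i, b i, c i) := ⟨ha i, hab i, hc i⟩
  rw [List.ofFn_succ]
  exact exists_tendsto_cycH_cons_iff (hindex 0) (List.forall_mem_ofFn_iff.2 fun i ↦ hindex i.succ)

/-- Convergence criterion for cyclotomic harmonic sums of depth `p + 1 ≥ 1`:
`S_{(a₀,b₀,c₀),…,(a_p,b_p,c_p)}(n)` converges as `n → ∞` iff `c₀ ≠ 1`. -/
theorem cycH_convergence_criterion (p : ℕ)
    (a b : Fin (p + 1) → ℕ) (c : Fin (p + 1) → ℤ)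
    (ha : ∀ i, 0 < a i) (hc : ∀ i, c i ≠ 0) :
    (∃ L : ℝ, Tendsto (fun n => cycH (List.ofFn fun i => (a i, (b i : ℤ), c i)) n)
        atTop (nhds L)) ↔ c 0 ≠ 1 :=
  cycH_convergence_criterion_general p a (fun i ↦ b i) c ha
    (fun i ↦ by have := ha i; positivity) hc
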